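/- Assign to the variable p_j the weight j (1 ≤ j ≤ k) and to the variable q_l the weight l (1 ≤ l ≤ n−k), and for each integer d ≥ 0 let A_d ⊆ A denote the image in A = P/I of the weighted-homogeneous polynomials of weighted degree d. Then for every integer j with 0 ≤ 2j ≤ k(n−k), the map A_j → A_{k(n−k)−j} given by multiplication by the class of p_1^{k(n−k)−2j} is a ℂ-linear isomorphism (the hard Lefschetz property of the cohomology ring of the complex Grassmannian, with A_j ≅ H^{2j}(Gr(k,n),ℂ) and p_1 = c_1(S) the generator of H²). -/

import Mathlib

open MvPolynomial Finset

/-- The polynomial ring `P = ℂ[p_1,…,p_k,q_1,…,q_{n-k}]`: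
the variable `Sum.inl j` is `p_{j+1}` and `Sum.inr l` is `q_{l+1}`. -/
abbrev PR (n k : ℕ) := MvPolynomial (Fin k ⊕ Fin (n - k)) ℂ

/-- `pZ n k a` is the Chern class generator `p_a`, with the conventions `p_0 = 1`
and `p_a = 0` for `a < 0` or `a > k`. -/
noncomputable def pZ (n k : ℕ) (a : ℤ) : PR n k :=
  if a = 0 then 1
  else if h : 1 ≤ a ∧ a ≤ (k : ℤ) then
    MvPolynomial.X (Sum.inl ⟨(a - 1).toNat, by omega⟩)
  else 0

/-- `qZ n k a` is the Chern class generator `q_a`, with the conventions `q_0 = 1`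
and `q_a = 0` for `a < 0` or `a > n-k`. -/
noncomputable def qZ (n k : ℕ) (a : ℤ) : PR n k :=
  if a = 0 then 1
  else if h : 1 ≤ a ∧ a ≤ ((n - k : ℕ) : ℤ) then
    MvPolynomial.X (Sum.inr ⟨(a - 1).toNat, by omega⟩)
  else 0

/-- `R_m = Σ_{r+s=m, r,s ≥ 0} p_r q_s`. -/
noncomputable def Rm (n k : ℕ) (m : ℕ) : PR n k :=
  ∑ x ∈ Finset.HasAntidiagonal.antidiagonal m, pZ n k x.1 * qZ n k x.2

/-- The ideal `I ⊆ P` generated by `R_1, …, R_n`. -/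
noncomputable def Igr (n k : ℕ) : Ideal (PR n k) :=
  Ideal.span ((fun m => Rm n k m) '' (Finset.Icc 1 n : Finset ℕ))

/-- Multiplication by `g` as a linear endomorphism of `P`. -/
noncomputable def Mop (n k : ℕ) (g : PR n k) : Module.End ℂ (PR n k) :=
  LinearMap.mulLeft ℂ g

/-- The partial derivative with respect to the variable `i`, as a linear endomorphism. -/
noncomputable def Pd (n k : ℕ) (i : Fin k ⊕ Fin (n - k)) : Module.End ℂ (PR n k) :=
  (MvPolynomial.pderiv i).toLinearMap

/-- The weight of each variable: `p_j` has weight `j` and `q_l` has weight `l`. -/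
def wt (n k : ℕ) : Fin k ⊕ Fin (n - k) → ℕ :=
  fun i => Sum.elim (fun j : Fin k => (j : ℕ) + 1) (fun l : Fin (n - k) => (l : ℕ) + 1) i

/-- `Agr n k d ⊆ A = P/I` is the image of the weighted-homogeneous polynomials of weighted
degree `d`; it corresponds to `H^{2d}(Gr(k,n),ℂ)`. -/
noncomputable def Agr (n k : ℕ) (d : ℕ) : Submodule ℂ (PR n k ⧸ Igr n k) :=
  Submodule.map (Ideal.Quotient.mkₐ ℂ (Igr n k)).toLinearMap
    (MvPolynomial.weightedHomogeneousSubmodule ℂ (wt n k) d)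

section LA
variable {A : Type*} [AddCommGroup A] [Module ℂ A]

/-- An `sl₂`-type package on a (not necessarily direct) family of subspaces. -/
structure SlData (e f : Module.End ℂ A) (V : ℤ → Submodule ℂ A) (N : ℤ) : Prop where
  he : ∀ d, ∀ x ∈ V d, e x ∈ V (d + 1)
  hf : ∀ d, ∀ x ∈ V d, f x ∈ V (d - 1)
  hc : ∀ d, ∀ x ∈ V d, e (f x) = f (e x) + (2 * (d : ℂ) - (N : ℂ)) • x
  hneg : ∀ d, d < 0 → ∀ x ∈ V d, x = 0

namespace SlData
variable {e f : Module.End ℂ A} {V : ℤ → Submodule ℂ A} {N : ℤ}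

lemma e_pow (S : SlData e f V N) (r : ℕ) : ∀ d, ∀ x ∈ V d, (e ^ r) x ∈ V (d + r) := by
  induction r with
  | zero => intro d x hx; simpa using hx
  | succ r ih =>
    intro d x hx
    have := S.he _ _ (ih d x hx)
    rw [pow_succ', Module.End.mul_apply]
    convert this using 2
    push_cast; ring

lemma f_pow (S : SlData e f V N) (r : ℕ) : ∀ d, ∀ x ∈ V d, (f ^ r) x ∈ V (d - r) := by
  induction r with
  | zero => intro d x hx; simpa using hx
  | succ r ih =>
    intro d x hx
    have := S.hf _ _ (ih d x hx)
    rw [pow_succ', Module.End.mul_apply]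
    convert this using 2
    push_cast; ring

lemma fe (S : SlData e f V N) (r : ℕ) : ∀ d, ∀ x ∈ V d, f ((e ^ (r + 1)) x) =
    (e ^ (r + 1)) (f x) - (((r : ℂ) + 1) * (2 * (d : ℂ) - N + r)) • (e ^ r) x := by
  induction r with
  | zero =>
    intro d x hx
    simp [S.hc d x hx]
  | succ r ih =>
    intro d x hx
    have h1 := ih (d + 1) (e x) (S.he d x hx)
    have h2 := S.hc d x hx
    have h3 : f (e x) = e (f x) - (2 * (d : ℂ) - (N : ℂ)) • x := by rw [h2]; simp
    rw [pow_succ e (r + 1), Module.End.mul_apply, h1, h3, map_sub, map_smul, Module.End.mul_apply,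
      pow_succ e r, Module.End.mul_apply, Module.End.mul_apply]
    push_cast
    module

lemma ef (S : SlData e f V N) (r : ℕ) : ∀ d, ∀ x ∈ V d, e ((f ^ (r + 1)) x) =
    (f ^ (r + 1)) (e x) + (((r : ℂ) + 1) * (2 * (d : ℂ) - N - r)) • (f ^ r) x := by
  induction r with
  | zero =>
    intro d x hx
    simp [S.hc d x hx]
  | succ r ih =>
    intro d x hx
    have h1 := ih (d - 1) (f x) (S.hf d x hx)
    have h3 := S.hc d x hx
    rw [pow_succ f (r + 1), Module.End.mul_apply, h1, h3, map_add, map_smul, Module.End.mul_apply,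
      pow_succ f r, Module.End.mul_apply, Module.End.mul_apply]
    push_cast
    module

lemma inj_aux (S : SlData e f V N) (d : ℤ) (m : ℕ) (hm : N = 2 * d + m) (x : A) (hx : x ∈ V d)
    (h : (e ^ m) x = 0) (hfx : f x = 0) : x = 0 := by
    have key : ∀ r, r ≤ m → (e ^ r) x = 0 → x = 0 := by
      intro r
      induction r with
      | zero => intro _ h; simpa using h
      | succ r ih =>
        intro hr h
        apply ih (by omega)
        have := S.fe r d x hx
        rw [h, hfx, map_zero, map_zero, zero_sub, eq_comm, neg_eq_zero, smul_eq_zero] at this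
        refine this.resolve_left ?_
        have h1 : ((r : ℤ) + 1) * (2 * d - N + r) ≠ 0 := by
          apply mul_ne_zero <;> omega
        exact_mod_cast h1
    exact key m le_rfl h

lemma inj (S : SlData e f V N) (j : ℕ) : ∀ m : ℕ, N = 2 * j + m → ∀ x ∈ V j,
    (e ^ m) x = 0 → x = 0 := by
  induction j with
  | zero =>
    intro m hm x hx h
    exact S.inj_aux 0 m (by simpa using hm) x hx h (S.hneg _ (by norm_num) _ (S.hf _ x hx))
  | succ j ih =>
    intro m hm x hx h
    refine S.inj_aux (j + 1 : ℕ) m (by simpa using hm) x hx h ?_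
    refine ih (m + 2) (by push_cast at hm ⊢; linarith) (f x) ?_ ?_
    · have := S.hf _ x hx
      convert this using 2
      push_cast; ring
    · have := S.fe m _ x hx
      rw [pow_succ', Module.End.mul_apply, h, map_zero, map_zero, smul_zero, sub_zero] at this
      rw [pow_succ', Module.End.mul_apply, pow_succ', Module.End.mul_apply]
      rw [Module.End.mul_apply] at this
      rw [← this, map_zero]

lemma vanish (S : SlData e f V N) (d : ℤ) (hd : N < d) (hd0 : 0 ≤ d) (x : A) (hx : x ∈ V d)
    (h : e x = 0) : x = 0 := by
  obtain ⟨D, rfl⟩ := Int.eq_ofNat_of_zero_le hd0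
  have key : ∀ r, r ≤ D + 1 → (f ^ r) x = 0 → x = 0 := by
    intro r
    induction r with
    | zero => intro _ h; simpa using h
    | succ r ih =>
      intro hr h'
      apply ih (by omega)
      have := S.ef r D x hx
      rw [h, h', map_zero, map_zero, zero_add, eq_comm, smul_eq_zero] at this
      refine this.resolve_left ?_
      have h1 : ((r : ℤ) + 1) * (2 * D - N - r) ≠ 0 := by
        apply mul_ne_zero <;> omega
      exact_mod_cast h1
  exact key (D + 1) le_rfl (S.hneg _ (by push_cast; omega) _ (S.f_pow (D + 1) _ x hx))

lemma vanish' (S : SlData e f V N) (M : ℕ) (hM : e ^ M = 0) (d : ℤ) (hd : N < d) (hd0 : 0 ≤ d)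
    (x : A) (hx : x ∈ V d) : x = 0 := by
  have key : ∀ r : ℕ, (e ^ r) x = 0 → x = 0 := by
    intro r
    induction r with
    | zero => intro h; simpa using h
    | succ r ih =>
      intro h
      apply ih
      refine S.vanish (d + r) (by omega) (by omega) _ (S.e_pow r d x hx) ?_
      rwa [pow_succ', Module.End.mul_apply] at h
  exact key M (by rw [hM]; rfl)

lemma surj_aux (S : SlData e f V N) (d : ℤ) (m : ℕ) (hm : 2 * d - N = m) (x : A) (hx : x ∈ V d)
    (h : e x = 0) : ∃ z ∈ V (d - m), (e ^ m) z = x := by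
  have key : ∀ r : ℕ, r ≤ m → ∃ c : ℂ, c ≠ 0 ∧ (e ^ r) ((f ^ r) x) = c • x := by
    intro r
    induction r with
    | zero => intro _; exact ⟨1, one_ne_zero, by simp⟩
    | succ r ih =>
      intro hr
      obtain ⟨c, hc, hcx⟩ := ih (by omega)
      have h1 : ((r : ℤ) + 1) * (2 * d - N - r) ≠ 0 := by
        apply mul_ne_zero <;> omega
      refine ⟨(((r : ℂ) + 1) * (2 * (d : ℂ) - N - r)) * c, mul_ne_zero (by exact_mod_cast h1) hc, ?_⟩
      rw [pow_succ e, Module.End.mul_apply, S.ef r d x hx, h, map_zero, zero_add, map_smul, hcx,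
        smul_smul]
  obtain ⟨c, hc, hcx⟩ := key m le_rfl
  refine ⟨c⁻¹ • (f ^ m) x, Submodule.smul_mem _ _ (S.f_pow m d x hx), ?_⟩
  rw [map_smul, hcx, smul_smul, inv_mul_cancel₀ hc, one_smul]

lemma surj (S : SlData e f V N) (M : ℕ) (hM : e ^ M = 0) (j : ℕ) :
    ∀ m : ℕ, N = 2 * j + m → ∀ y ∈ V (j + m), ∃ x ∈ V j, (e ^ m) x = y := by
  induction j with
  | zero =>
    intro m hm y hy
    have := S.surj_aux _ m (by push_cast at hm ⊢; omega) y hy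
      (S.vanish' M hM _ (by push_cast at hm ⊢; omega) (by push_cast at hm ⊢; omega) _ (S.he _ y hy))
    simpa using this
  | succ j ih =>
    intro m hm y hy
    have hy1 := S.he _ y hy
    obtain ⟨z, hz, hzy⟩ := ih (m + 2) (by push_cast at hm ⊢; omega) (e y) (by
      convert hy1 using 2
      push_cast; ring)
    have hez := S.e_pow (m + 1) _ z hz
    have h1 := S.surj_aux ((j + 1 : ℕ) + m) m (by push_cast at hm ⊢; omega)
      (y - (e ^ (m + 1)) z) (Submodule.sub_mem _ hy (by
        convert hez using 2
        push_cast; ring)) (by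
        rw [map_sub, ← hzy, pow_succ' e (m + 1), Module.End.mul_apply, sub_self])
    obtain ⟨u, hu, huy⟩ := h1
    have hu' : u ∈ V ((j + 1 : ℕ) : ℤ) := by
      convert hu using 2
      push_cast; ring
    refine ⟨u + e z, Submodule.add_mem _ hu' ?_, ?_⟩
    · have := S.he _ z hz
      convert this using 2
      push_cast; rfl
    · rw [map_add, huy, pow_succ, Module.End.mul_apply, sub_add_cancel]

end SlData
end LA

section Sym

/-- `p_a` in `ℂ[p_1,…,p_k]`. -/
noncomputable def pp (k : ℕ) : ℕ → MvPolynomial (Fin k) ℂ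
  | 0 => 1
  | a + 1 => if h : a < k then X ⟨a, h⟩ else 0

lemma pp_zero (k : ℕ) : pp k 0 = 1 := rfl

lemma pp_succ (k a : ℕ) : pp k (a + 1) = if h : a < k then X ⟨a, h⟩ else 0 := rfl

lemma pp_fin (k : ℕ) (a : Fin k) : pp k (a + 1) = X a := by simp [pp_succ]

lemma pp_big (k a : ℕ) (h : k < a) : pp k a = 0 := by
  cases a with
  | zero => omega
  | succ a => rw [pp_succ, dif_neg (by omega)]

/-- coefficients of the inverse power series of `∑ p_a t^a`. -/
noncomputable def hh (k : ℕ) (m : ℕ) : MvPolynomial (Fin k) ℂ :=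
  PowerSeries.coeff m (PowerSeries.invOfUnit (PowerSeries.mk (pp k)) 1)

lemma pp_hh_series (k : ℕ) : PowerSeries.mk (pp k) * PowerSeries.mk (hh k) = 1 := by
  have h := PowerSeries.mul_invOfUnit (PowerSeries.mk (pp k)) 1 (by
    rw [← PowerSeries.coeff_zero_eq_constantCoeff_apply]; simp [pp_zero])
  convert h using 2
  ext m : 1
  simp [hh]

lemma pp_hh (k m : ℕ) :
    ∑ x ∈ antidiagonal (m + 1), pp k x.1 * hh k x.2 = 0 := by
  have h := congrArg (PowerSeries.coeff (m + 1)) (pp_hh_series k)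
  simpa [PowerSeries.coeff_mul, PowerSeries.coeff_one] using h

lemma hh_zero (k : ℕ) : hh k 0 = 1 := by
  have h := congrArg (PowerSeries.coeff 0) (pp_hh_series k)
  simpa [PowerSeries.coeff_mul, PowerSeries.coeff_one, pp_zero] using h

lemma pp_conv_inj (k : ℕ) (E : ℕ → MvPolynomial (Fin k) ℂ)
    (h : ∀ m, ∑ x ∈ antidiagonal m, pp k x.1 * E x.2 = 0) (m : ℕ) : E m = 0 := by
  have h1 : PowerSeries.mk (pp k) * PowerSeries.mk E = 0 := by
    ext m : 1
    simpa [PowerSeries.coeff_mul] using h m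
  have h2 : PowerSeries.mk E = 0 := by
    calc PowerSeries.mk E = (PowerSeries.mk (pp k) * PowerSeries.mk (hh k)) * PowerSeries.mk E := by
          rw [pp_hh_series, one_mul]
      _ = PowerSeries.mk (hh k) * (PowerSeries.mk (pp k) * PowerSeries.mk E) := by ring
      _ = 0 := by rw [h1, mul_zero]
  simpa using congrArg (PowerSeries.coeff m) h2

/-- The second order coefficients `Γ(p_a, p_b)`. -/
noncomputable def cc (k : ℕ) : ℕ → ℕ → MvPolynomial (Fin k) ℂ
  | 0, _ => 0
  | a + 1, b => cc k a (b + 1) + ((a : MvPolynomial (Fin k) ℂ) - b) * (pp k a * pp k b)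

lemma cc_zero (k b : ℕ) : cc k 0 b = 0 := by rw [cc]

lemma cc_succ (k a b : ℕ) : cc k (a + 1) b =
    cc k a (b + 1) + ((a : MvPolynomial (Fin k) ℂ) - b) * (pp k a * pp k b) := by rw [cc]

lemma cc_sub (k : ℕ) (a : ℕ) : ∀ b, cc k a b - cc k b a = - cc k (a + b) 0 := by
  induction a with
  | zero => intro b; simp [cc_zero]
  | succ a ih =>
    intro b
    have h := ih (b + 1)
    rw [cc_succ k b a] at h
    rw [cc_succ k a b, show a + 1 + b = a + (b + 1) by ring, ← h]
    ring

lemma cc_right_zero (k a : ℕ) : cc k a 0 = 0 := by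
  have h := cc_sub k a 0
  simp only [cc_zero, sub_zero, add_zero] at h
  have h2 : (2 : MvPolynomial (Fin k) ℂ) * cc k a 0 = 0 := by linear_combination h
  simpa using h2

lemma cc_symm (k a b : ℕ) : cc k a b = cc k b a := by
  have h := cc_sub k a b
  rw [cc_right_zero, neg_zero] at h
  exact sub_eq_zero.mp h

lemma cc_big (k : ℕ) (a : ℕ) : ∀ b, k < b → cc k a b = 0 := by
  induction a with
  | zero => intro b _; exact cc_zero k b
  | succ a ih =>
    intro b hb
    rw [cc_succ, ih (b + 1) (by omega), pp_big k b hb]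
    ring

/-- The derivation `Γ(p_a, ·)`. -/
noncomputable def Gam (k a : ℕ) :
    Derivation ℂ (MvPolynomial (Fin k) ℂ) (MvPolynomial (Fin k) ℂ) :=
  MvPolynomial.mkDerivation ℂ (fun b : Fin k => cc k a (b + 1))

lemma Gam_X (k a : ℕ) (b : Fin k) : Gam k a (X b) = cc k a (b + 1) := by
  rw [Gam, MvPolynomial.mkDerivation_X]

lemma Gam_pp (k a b : ℕ) : Gam k a (pp k b) = cc k a b := by
  cases b with
  | zero => rw [pp_zero, cc_right_zero]; exact Derivation.map_one_eq_zero _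
  | succ b =>
    rw [pp_succ]
    split_ifs with h
    · rw [Gam_X]
    · rw [map_zero, cc_big k a _ (by omega)]

lemma Gam_eq (k a : ℕ) (y : MvPolynomial (Fin k) ℂ) :
    Gam k a y = ∑ b : Fin k, cc k a (b + 1) * pderiv b y := by
  have key : ∀ z, (∑ b : Fin k, cc k a (b + 1) • pderiv (R := ℂ) b) z =
      ∑ b : Fin k, cc k a (b + 1) * pderiv b z := by
    intro z
    have := congrFun (map_sum Derivation.coeFnAddMonoidHom
      (fun b : Fin k => cc k a (b + 1) • pderiv (R := ℂ) b) Finset.univ) z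
    rw [Finset.sum_apply] at this
    exact this
  have h : Gam k a = ∑ b : Fin k, cc k a (b + 1) • pderiv b := by
    apply MvPolynomial.derivation_ext
    intro i
    rw [Gam_X, key]
    simp [pderiv_X, Pi.single_apply]
  rw [h, key]

/-- `Γ(p_a, h_m)`. -/
noncomputable def gg (k : ℕ) : ℕ → ℕ → MvPolynomial (Fin k) ℂ
  | 0, _ => 0
  | a + 1, m => gg k a (m + 1) - ((a : MvPolynomial (Fin k) ℂ) + m) * (pp k a * hh k m)

lemma gg_zero (k b : ℕ) : gg k 0 b = 0 := by rw [gg]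

lemma gg_succ (k a m : ℕ) : gg k (a + 1) m =
    gg k a (m + 1) - ((a : MvPolynomial (Fin k) ℂ) + m) * (pp k a * hh k m) := by rw [gg]

lemma gg_T (k : ℕ) (a : ℕ) : gg k a 0 = 0 ∧ ∀ m,
    ∑ x ∈ antidiagonal m, (cc k a x.1 * hh k x.2 + pp k x.1 * gg k a x.2) = 0 := by
  have suff : ∀ a, (∀ m, ∑ x ∈ antidiagonal m,
      (cc k a x.1 * hh k x.2 + pp k x.1 * gg k a x.2) = 0) → gg k a 0 = 0 := by
    intro a h
    simpa [pp_zero, cc_right_zero] using h 0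
  induction a with
  | zero => simp [gg_zero, cc_zero]
  | succ a ih =>
    have hT : ∀ m, ∑ x ∈ antidiagonal m,
        (cc k (a + 1) x.1 * hh k x.2 + pp k x.1 * gg k (a + 1) x.2) = 0 := by
      intro m
      have h1 := ih.2 (m + 1)
      rw [Finset.sum_add_distrib, Finset.Nat.sum_antidiagonal_succ,
        Finset.Nat.sum_antidiagonal_succ', ih.1, cc_right_zero, zero_mul, mul_zero, zero_add,
        zero_add, ← Finset.sum_add_distrib] at h1
      have h2 : (m : MvPolynomial (Fin k) ℂ) * pp k a *
          ∑ x ∈ antidiagonal m, pp k x.1 * hh k x.2 = 0 := by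
        cases m with
        | zero => simp
        | succ m => rw [pp_hh, mul_zero]
      have h3 := sub_eq_zero.mpr (h1.trans h2.symm)
      rw [Finset.mul_sum, ← Finset.sum_sub_distrib] at h3
      rw [← h3]
      refine Finset.sum_congr rfl fun x hx => ?_
      rw [gg_succ, cc_succ, ← Finset.HasAntidiagonal.mem_antidiagonal.mp hx]
      push_cast
      ring
    exact ⟨suff _ hT, hT⟩

lemma Gam_hh (k a m : ℕ) : Gam k a (hh k m) = gg k a m := by
  have := pp_conv_inj k (fun m => Gam k a (hh k m) - gg k a m) ?_ m
  · exact sub_eq_zero.mp this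
  intro m
  have h1 := (gg_T k a).2 m
  have h2 : ∑ x ∈ antidiagonal m,
      (cc k a x.1 * hh k x.2 + pp k x.1 * Gam k a (hh k x.2)) = 0 := by
    have : ∑ x ∈ antidiagonal m,
      (cc k a x.1 * hh k x.2 + pp k x.1 * Gam k a (hh k x.2)) =
      Gam k a (∑ x ∈ antidiagonal m, pp k x.1 * hh k x.2) := by
      rw [map_sum]
      refine Finset.sum_congr rfl fun x _ => ?_
      rw [Derivation.leibniz, Gam_pp, smul_eq_mul, smul_eq_mul]
      ring
    rw [this]
    cases m with
    | zero => simp [pp_zero, hh_zero]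
    | succ m => rw [pp_hh, map_zero]
  rw [← sub_eq_zero.mpr (h2.trans h1.symm), ← Finset.sum_sub_distrib]
  refine Finset.sum_congr rfl fun x _ => ?_
  ring

/-- The lowering operator. -/
noncomputable def Dop (k l : ℕ) : MvPolynomial (Fin k) ℂ →ₗ[ℂ] MvPolynomial (Fin k) ℂ :=
  ∑ a : Fin k, ((LinearMap.mulLeft ℂ
      (((k : MvPolynomial (Fin k) ℂ) - (a : ℕ)) * ((l : MvPolynomial (Fin k) ℂ) + (a : ℕ)) *
        pp k a)) ∘ₗ (pderiv a).toLinearMap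
    + (Gam k (a + 1)).toLinearMap ∘ₗ (pderiv a).toLinearMap)

lemma Dop_apply (k l : ℕ) (x : MvPolynomial (Fin k) ℂ) : Dop k l x =
    ∑ a : Fin k, (((k : MvPolynomial (Fin k) ℂ) - (a : ℕ)) *
      ((l : MvPolynomial (Fin k) ℂ) + (a : ℕ)) * pp k a * pderiv a x
      + Gam k (a + 1) (pderiv a x)) := by
  simp [Dop, LinearMap.sum_apply, mul_assoc]

/-- The symmetric bidifferential form. -/
noncomputable def BB (k : ℕ) (x y : MvPolynomial (Fin k) ℂ) : MvPolynomial (Fin k) ℂ :=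
  ∑ a : Fin k, pderiv a x * Gam k (a + 1) y

lemma BB_symm (k : ℕ) (x y : MvPolynomial (Fin k) ℂ) : BB k x y = BB k y x := by
  simp only [BB, Gam_eq, Finset.mul_sum]
  rw [Finset.sum_comm]
  refine Finset.sum_congr rfl fun a _ => Finset.sum_congr rfl fun b _ => ?_
  rw [cc_symm]
  ring

lemma Dop_mul (k l : ℕ) (x y : MvPolynomial (Fin k) ℂ) :
    Dop k l (x * y) = Dop k l x * y + x * Dop k l y + 2 * BB k x y := by
  have h : 2 * BB k x y = BB k x y + BB k y x := by rw [BB_symm k y x]; ring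
  rw [h]
  simp only [Dop_apply, BB, Finset.sum_mul, Finset.mul_sum, ← Finset.sum_add_distrib]
  refine Finset.sum_congr rfl fun a _ => ?_
  simp only [Derivation.leibniz, map_add, smul_eq_mul]
  ring

lemma Dop_one (k l : ℕ) : Dop k l 1 = 0 := by
  rw [Dop_apply]
  refine Finset.sum_eq_zero fun a _ => ?_
  simp

lemma BB_pp (k r : ℕ) (y : MvPolynomial (Fin k) ℂ) : BB k (pp k r) y = Gam k r y := by
  cases r with
  | zero =>
    rw [Gam_eq, BB, pp_zero]
    simp [cc_zero]
  | succ r =>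
    by_cases h : r < k
    · rw [pp_succ, dif_pos h, BB]
      rw [Finset.sum_eq_single (⟨r, h⟩ : Fin k)]
      · simp
      · intro b _ hb
        rw [pderiv_X_of_ne hb.symm, zero_mul]
      · simp
    · rw [pp_big k _ (by omega), Gam_eq, BB]
      simp only [map_zero, zero_mul, Finset.sum_const_zero]
      refine (Finset.sum_eq_zero fun b _ => ?_).symm
      rw [cc_symm, cc_big k _ _ (by omega), zero_mul]

lemma Dop_pp (k l r : ℕ) : Dop k l (pp k (r + 1)) =
    ((k : MvPolynomial (Fin k) ℂ) - (r : ℕ)) *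
      ((l : MvPolynomial (Fin k) ℂ) + (r : ℕ)) * pp k r := by
  by_cases h : r < k
  · rw [pp_succ, dif_pos h, Dop_apply]
    rw [Finset.sum_eq_single (⟨r, h⟩ : Fin k)]
    · simp
    · intro b _ hb
      rw [pderiv_X_of_ne hb.symm, mul_zero, map_zero, add_zero]
    · simp
  · rw [pp_big k _ (by omega), map_zero]
    rcases (not_lt.mp h).eq_or_lt with h | h
    · subst h; ring
    · rw [pp_big k r h, mul_zero]

lemma gg_sum (k m : ℕ) : ∑ x ∈ antidiagonal (m + 1), gg k x.1 x.2 =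
    - ∑ x ∈ antidiagonal m, (m : MvPolynomial (Fin k) ℂ) *
      (((x.2 : MvPolynomial (Fin k) ℂ) + 1) * (pp k x.1 * hh k x.2)) := by
  have h1 : ∑ x ∈ antidiagonal (m + 1), (x.2 : MvPolynomial (Fin k) ℂ) * gg k x.1 x.2
     = ∑ x ∈ antidiagonal m, ((x.2 : MvPolynomial (Fin k) ℂ) + 1) * gg k x.1 (x.2 + 1) := by
    rw [Finset.Nat.sum_antidiagonal_succ']
    simp
  have h2 : ∑ x ∈ antidiagonal (m + 1), ((x.2 : MvPolynomial (Fin k) ℂ) + 1) * gg k x.1 x.2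
     = ∑ x ∈ antidiagonal m, ((x.2 : MvPolynomial (Fin k) ℂ) + 1) * gg k (x.1 + 1) x.2 := by
    rw [Finset.Nat.sum_antidiagonal_succ]
    simp [gg_zero]
  have h3 : ∑ x ∈ antidiagonal (m + 1), gg k x.1 x.2 =
      ∑ x ∈ antidiagonal (m + 1), ((x.2 : MvPolynomial (Fin k) ℂ) + 1) * gg k x.1 x.2 -
      ∑ x ∈ antidiagonal (m + 1), (x.2 : MvPolynomial (Fin k) ℂ) * gg k x.1 x.2 := by
    rw [← Finset.sum_sub_distrib]
    refine Finset.sum_congr rfl fun x _ => ?_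
    ring
  rw [h3, h1, h2, ← Finset.sum_sub_distrib, ← Finset.sum_neg_distrib]
  refine Finset.sum_congr rfl fun x hx => ?_
  rw [gg_succ, ← Finset.HasAntidiagonal.mem_antidiagonal.mp hx]
  push_cast
  ring

lemma Dop_hh (k l m : ℕ) : Dop k l (hh k (m + 1)) =
    - (((k : MvPolynomial (Fin k) ℂ) + (m : ℕ)) *
      ((l : MvPolynomial (Fin k) ℂ) - (m : ℕ)) * hh k m) := by
  have := pp_conv_inj k (fun m => Dop k l (hh k (m + 1)) +
    (((k : MvPolynomial (Fin k) ℂ) + (m : ℕ)) *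
      ((l : MvPolynomial (Fin k) ℂ) - (m : ℕ)) * hh k m)) ?_ m
  · exact eq_neg_of_add_eq_zero_left this
  intro m
  have h1 : ∑ x ∈ antidiagonal (m + 1), (Dop k l (pp k x.1) * hh k x.2
      + pp k x.1 * Dop k l (hh k x.2) + 2 * gg k x.1 x.2) = 0 := by
    have h := congrArg (Dop k l) (pp_hh k m)
    rw [map_sum, map_zero] at h
    rw [← h]
    refine Finset.sum_congr rfl fun x _ => ?_
    rw [Dop_mul, BB_pp, Gam_hh]
  rw [Finset.sum_add_distrib, Finset.sum_add_distrib, ← Finset.mul_sum, gg_sum,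
    Finset.Nat.sum_antidiagonal_succ, Finset.Nat.sum_antidiagonal_succ'] at h1
  simp only [pp_zero, hh_zero, Dop_one, zero_mul, mul_zero, zero_add, Dop_pp] at h1
  have h2 : (m : MvPolynomial (Fin k) ℂ) * ((l : MvPolynomial (Fin k) ℂ) - k + m + 2) *
      ∑ x ∈ antidiagonal m, pp k x.1 * hh k x.2 = 0 := by
    cases m with
    | zero => simp
    | succ m => rw [pp_hh, mul_zero]
  have h3 := congrArg₂ (· + ·) h1 h2
  simp only [add_zero] at h3
  rw [← h3, ← Finset.sum_neg_distrib, Finset.mul_sum, Finset.mul_sum, ← Finset.sum_add_distrib,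
    ← Finset.sum_add_distrib, ← Finset.sum_add_distrib]
  refine Finset.sum_congr rfl fun x hx => ?_
  rw [← Finset.HasAntidiagonal.mem_antidiagonal.mp hx]
  push_cast
  ring

end Sym

section Homog

lemma whom_ind {σ : Type*} (w : σ → ℤ) (M : ℤ → MvPolynomial σ ℂ → Prop)
    (h0 : ∀ d, M d 0) (hadd : ∀ d x y, M d x → M d y → M d (x + y))
    (hC : ∀ r : ℂ, M 0 (C r))
    (hX : ∀ i d y, IsWeightedHomogeneous w y d → M d y → M (d + w i) (X i * y))
    (d : ℤ) (y : MvPolynomial σ ℂ) (hy : IsWeightedHomogeneous w y d) : M d y := by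
  classical
  have hmon : ∀ (s : σ →₀ ℕ) (r : ℂ), ∃ e, IsWeightedHomogeneous w (monomial s r) e ∧
      M e (monomial s r) := by
    intro s r
    refine MvPolynomial.induction_on_monomial
      (motive := fun p => ∃ e, IsWeightedHomogeneous w p e ∧ M e p) ?_ ?_ s r
    · intro a
      exact ⟨0, isWeightedHomogeneous_C w a, hC a⟩
    · rintro p i ⟨e, he, hM⟩
      rw [mul_comm]
      refine ⟨e + w i, ?_, hX i e p he hM⟩
      rw [add_comm]
      exact (isWeightedHomogeneous_X ℂ w i).mul he
  have hsum : ∀ (t : Finset (σ →₀ ℕ)), t ⊆ y.support →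
      M d (∑ s ∈ t, monomial s (coeff s y)) := by
    intro t
    induction t using Finset.induction_on with
    | empty => intro _; simpa using h0 d
    | insert s t hs ih =>
      intro hsub
      rw [Finset.sum_insert hs]
      refine hadd _ _ _ ?_ (ih fun u hu => hsub (Finset.mem_insert_of_mem hu))
      have hne : coeff s y ≠ 0 := mem_support_iff.mp (hsub (Finset.mem_insert_self _ _))
      obtain ⟨e, he, hM⟩ := hmon s (coeff s y)
      have h1 : IsWeightedHomogeneous w (monomial s (coeff s y)) d :=
        isWeightedHomogeneous_monomial w s _ (hy hne)
      have : e = d := he.inj_right (by simpa using hne) h1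
      rwa [this] at hM
  rw [MvPolynomial.as_sum y]
  exact hsum _ (Finset.Subset.refl _)

lemma whom_algHom {σ τ : Type*} (w : σ → ℤ) (v : τ → ℤ)
    (φ : MvPolynomial σ ℂ →ₐ[ℂ] MvPolynomial τ ℂ)
    (hφ : ∀ i, IsWeightedHomogeneous v (φ (X i)) (w i)) (d : ℤ) (y : MvPolynomial σ ℂ)
    (hy : IsWeightedHomogeneous w y d) : IsWeightedHomogeneous v (φ y) d := by
  refine whom_ind w (fun d y => IsWeightedHomogeneous v (φ y) d) ?_ ?_ ?_ ?_ d y hy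
  · intro d; rw [map_zero]; exact isWeightedHomogeneous_zero _ _ _
  · intro d x y hx hy; rw [map_add]; exact hx.add hy
  · intro r
    have : φ (C r) = C r := φ.commutes r
    rw [this]; exact isWeightedHomogeneous_C _ _
  · intro i d y _ hy
    rw [map_mul, add_comm]
    exact (hφ i).mul hy

/-- Integer weights on `ℂ[p_1,…,p_k]`. -/
def wS (k : ℕ) : Fin k → ℤ := fun j => (j : ℕ) + 1

lemma whom_nat_mul {σ : Type*} {w : σ → ℤ} {d : ℤ} {y : MvPolynomial σ ℂ} (c : ℂ)
    (hy : IsWeightedHomogeneous w y d) (z : MvPolynomial σ ℂ) (hz : z = C c) :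
    IsWeightedHomogeneous w (z * y) d := by
  rw [hz]; exact hy.C_mul c

lemma pp_hom (k a : ℕ) : IsWeightedHomogeneous (wS k) (pp k a) a := by
  cases a with
  | zero => exact isWeightedHomogeneous_one _ _
  | succ a =>
    rw [pp_succ]
    split_ifs with h
    · have := isWeightedHomogeneous_X ℂ (wS k) ⟨a, h⟩
      simpa [wS] using this
    · exact isWeightedHomogeneous_zero _ _ _

lemma hh_hom (k m : ℕ) : IsWeightedHomogeneous (wS k) (hh k m) m := by
  induction m using Nat.strong_induction_on with
  | _ m ih =>
    cases m with
    | zero => rw [hh_zero]; exact isWeightedHomogeneous_one _ _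
    | succ m =>
      have h := pp_hh k m
      rw [Finset.Nat.sum_antidiagonal_succ, pp_zero, one_mul] at h
      rw [eq_neg_of_add_eq_zero_left h]
      refine IsWeightedHomogeneous.neg (IsWeightedHomogeneous.sum _ _ _ fun x hx => ?_)
      have hx := Finset.HasAntidiagonal.mem_antidiagonal.mp hx
      have := (pp_hom k (x.1 + 1)).mul (ih x.2 (by omega))
      have h2 : (x.1 : ℤ) + x.2 = m := by exact_mod_cast hx
      have h3 : ((m + 1 : ℕ) : ℤ) = ((x.1 + 1 : ℕ) : ℤ) + ((x.2 : ℕ) : ℤ) := by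
        push_cast
        linarith
      rw [h3]
      exact this

lemma cc_hom (k a : ℕ) : ∀ b, IsWeightedHomogeneous (wS k) (cc k a b) (a + b - 1) := by
  induction a with
  | zero => intro b; rw [cc_zero]; exact isWeightedHomogeneous_zero _ _ _
  | succ a ih =>
    intro b
    rw [cc_succ]
    refine IsWeightedHomogeneous.add ?_ ?_
    · convert ih (b + 1) using 1
      push_cast; ring
    · refine whom_nat_mul ((a : ℂ) - b) ?_ _ (by simp)
      convert (pp_hom k a).mul (pp_hom k b) using 1
      push_cast; ring

lemma Gam_hom (k a : ℕ) (d : ℤ) (y : MvPolynomial (Fin k) ℂ)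
    (hy : IsWeightedHomogeneous (wS k) y d) :
    IsWeightedHomogeneous (wS k) (Gam k a y) (d + a - 1) := by
  refine whom_ind (wS k) (fun d y => IsWeightedHomogeneous (wS k) (Gam k a y) (d + a - 1))
    ?_ ?_ ?_ ?_ d y hy
  · intro d; rw [map_zero]; exact isWeightedHomogeneous_zero _ _ _
  · intro d x y hx hy; rw [map_add]; exact hx.add hy
  · intro r
    have : Gam k a (C r) = 0 := Derivation.map_algebraMap _ r
    rw [this]; exact isWeightedHomogeneous_zero _ _ _
  · intro i d y hy hM
    rw [Derivation.leibniz, Gam_X, smul_eq_mul, smul_eq_mul]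
    refine IsWeightedHomogeneous.add ?_ ?_
    · convert (isWeightedHomogeneous_X ℂ (wS k) i).mul hM using 1
      ring
    · convert hy.mul (cc_hom k a (i + 1)) using 1
      simp only [wS]; push_cast; ring

lemma Gam_one_euler (k : ℕ) (d : ℤ) (y : MvPolynomial (Fin k) ℂ)
    (hy : IsWeightedHomogeneous (wS k) y d) : Gam k 1 y = (-(d : ℂ)) • y := by
  refine whom_ind (wS k) (fun d y => Gam k 1 y = (-(d : ℂ)) • y) ?_ ?_ ?_ ?_ d y hy
  · intro d; simp
  · intro d x y hx hy; rw [map_add, hx, hy, smul_add]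
  · intro r
    have : Gam k 1 (C r) = 0 := Derivation.map_algebraMap _ r
    rw [this]; simp
  · intro i d y _ hM
    rw [Derivation.leibniz, Gam_X, hM, smul_eq_mul, smul_eq_mul, cc_succ, cc_zero, pp_zero, pp_fin]
    simp only [MvPolynomial.smul_eq_C_mul, wS]
    push_cast
    simp only [map_neg, map_add, map_natCast, map_one]
    ring

lemma Dop_C (k l : ℕ) (r : ℂ) : Dop k l (C r) = 0 := by
  rw [Dop_apply]
  refine Finset.sum_eq_zero fun a _ => ?_
  simp

lemma Dop_hom (k l : ℕ) (d : ℤ) (y : MvPolynomial (Fin k) ℂ)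
    (hy : IsWeightedHomogeneous (wS k) y d) :
    IsWeightedHomogeneous (wS k) (Dop k l y) (d - 1) := by
  refine whom_ind (wS k) (fun d y => IsWeightedHomogeneous (wS k) (Dop k l y) (d - 1))
    ?_ ?_ ?_ ?_ d y hy
  · intro d; rw [map_zero]; exact isWeightedHomogeneous_zero _ _ _
  · intro d x y hx hy; rw [map_add]; exact hx.add hy
  · intro r
    rw [Dop_C]; exact isWeightedHomogeneous_zero _ _ _
  · intro i d y hy hM
    rw [Dop_mul, ← pp_fin, BB_pp, Dop_pp]
    refine IsWeightedHomogeneous.add (IsWeightedHomogeneous.add ?_ ?_) ?_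
    · rw [mul_assoc]
      refine whom_nat_mul (((k : ℂ) - (i : ℕ)) * ((l : ℂ) + (i : ℕ))) ?_ _ (by simp)
      convert (pp_hom k i).mul hy using 1
      simp only [wS]; ring
    · convert (pp_hom k (i + 1)).mul hM using 1
      simp only [wS]; push_cast; ring
    · refine whom_nat_mul 2 ?_ _ (map_ofNat C 2).symm
      convert Gam_hom k (i + 1) d y hy using 1
      simp only [wS]; push_cast; ring

lemma Dop_comm (k l : ℕ) (d : ℤ) (y : MvPolynomial (Fin k) ℂ)
    (hy : IsWeightedHomogeneous (wS k) y d) :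
    Dop k l (pp k 1 * y) = pp k 1 * Dop k l y + (((k * l : ℕ) : ℂ) - 2 * (d : ℂ)) • y := by
  rw [Dop_mul, BB_pp, Gam_one_euler k d y hy, Dop_pp k l 0, pp_zero]
  simp only [MvPolynomial.smul_eq_C_mul]
  simp only [map_neg, map_sub, map_mul, map_natCast, map_ofNat]
  push_cast
  ring

end Homog

section Ideals

/-- The ideal of `ℂ[p_1,…,p_k]` generated by the `h_m` with `m > l`. -/
noncomputable def Jid (k l : ℕ) : Ideal (MvPolynomial (Fin k) ℂ) :=
  Ideal.span (hh k '' {m | l < m})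

lemma hh_mem (k l m : ℕ) (h : l < m) : hh k m ∈ Jid k l :=
  Ideal.subset_span ⟨m, h, rfl⟩

lemma gg_mem (k l a : ℕ) : ∀ m, l < m → gg k a m ∈ Jid k l := by
  induction a with
  | zero => intro m _; rw [gg_zero]; exact Ideal.zero_mem _
  | succ a ih =>
    intro m hm
    rw [gg_succ]
    exact Ideal.sub_mem _ (ih _ (by omega))
      (Ideal.mul_mem_left _ _ (Ideal.mul_mem_left _ _ (hh_mem k l m hm)))

lemma Gam_mem (k l a : ℕ) (x : MvPolynomial (Fin k) ℂ) (hx : x ∈ Jid k l) :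
    Gam k a x ∈ Jid k l := by
  refine Submodule.span_induction (p := fun x _ => Gam k a x ∈ Jid k l) ?_ ?_ ?_ ?_ hx
  · rintro _ ⟨m, hm, rfl⟩
    rw [Gam_hh]; exact gg_mem k l a m hm
  · rw [map_zero]; exact Ideal.zero_mem _
  · intro x y _ _ h1 h2; rw [map_add]; exact Ideal.add_mem _ h1 h2
  · intro r x hx h
    rw [smul_eq_mul, Derivation.leibniz, smul_eq_mul, smul_eq_mul]
    exact Ideal.add_mem _ (Ideal.mul_mem_left _ _ h) (Ideal.mul_mem_right _ _ hx)

lemma Dop_mem (k l : ℕ) (x : MvPolynomial (Fin k) ℂ) (hx : x ∈ Jid k l) :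
    Dop k l x ∈ Jid k l := by
  refine Submodule.span_induction (p := fun x _ => Dop k l x ∈ Jid k l) ?_ ?_ ?_ ?_ hx
  · rintro _ ⟨m, hm, rfl⟩
    have hm : l < m := hm
    cases m with
    | zero => omega
    | succ m =>
      rw [Dop_hh]
      refine Submodule.neg_mem _ ?_
      rcases (Nat.lt_succ_iff.mp hm).eq_or_lt with h | h
      · subst h; simp
      · exact Ideal.mul_mem_left _ _ (hh_mem k l m h)
  · rw [map_zero]; exact Ideal.zero_mem _
  · intro x y _ _ h1 h2; rw [map_add]; exact Ideal.add_mem _ h1 h2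
  · intro r x hx h
    rw [smul_eq_mul, Dop_mul]
    refine Ideal.add_mem _ (Ideal.add_mem _ (Ideal.mul_mem_left _ _ hx)
      (Ideal.mul_mem_left _ _ h)) (Ideal.mul_mem_left _ _ ?_)
    exact Ideal.sum_mem _ fun a _ => Ideal.mul_mem_left _ _ (Gam_mem k l _ x hx)

end Ideals

section Transport

/-- inclusion `ℂ[p] → P`. -/
noncomputable def iot (n k : ℕ) : MvPolynomial (Fin k) ℂ →ₐ[ℂ] PR n k :=
  MvPolynomial.aeval (fun j => X (Sum.inl j))

/-- elimination `P → ℂ[p]`, `q_b ↦ h_b`. -/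
noncomputable def phi (n k : ℕ) : PR n k →ₐ[ℂ] MvPolynomial (Fin k) ℂ :=
  MvPolynomial.aeval (Sum.elim (fun j => X j) (fun l => hh k (l + 1)))

lemma pZ_succ (n k a : ℕ) : pZ n k ((a + 1 : ℕ) : ℤ) =
    if h : a < k then X (Sum.inl ⟨a, h⟩) else 0 := by
  rw [pZ, if_neg (by omega)]
  by_cases h : a < k
  · rw [dif_pos (by omega), dif_pos h]
    congr 3
    omega
  · rw [dif_neg (by omega), dif_neg h]

lemma qZ_succ (n k a : ℕ) : qZ n k ((a + 1 : ℕ) : ℤ) =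
    if h : a < n - k then X (Sum.inr ⟨a, h⟩) else 0 := by
  rw [qZ, if_neg (by omega)]
  by_cases h : a < n - k
  · rw [dif_pos (by omega), dif_pos h]
    congr 3
    omega
  · rw [dif_neg (by omega), dif_neg h]

lemma pZ_zero (n k : ℕ) : pZ n k ((0 : ℕ) : ℤ) = 1 := by simp [pZ]

lemma qZ_zero (n k : ℕ) : qZ n k ((0 : ℕ) : ℤ) = 1 := by simp [qZ]

lemma iot_pp (n k a : ℕ) : iot n k (pp k a) = pZ n k (a : ℤ) := by
  cases a with
  | zero => rw [pp_zero, map_one, pZ_zero]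
  | succ a =>
    rw [pp_succ, pZ_succ]
    split_ifs with h
    · simp [iot]
    · simp

lemma phi_pZ (n k a : ℕ) : phi n k (pZ n k (a : ℤ)) = pp k a := by
  cases a with
  | zero => rw [pp_zero, pZ_zero, map_one]
  | succ a =>
    rw [pp_succ, pZ_succ]
    split_ifs with h
    · simp [phi]
    · simp

lemma phi_qZ (n k a : ℕ) : phi n k (qZ n k (a : ℤ)) = if a ≤ n - k then hh k a else 0 := by
  cases a with
  | zero => rw [qZ_zero, map_one, if_pos (by omega), hh_zero]
  | succ a =>
    rw [qZ_succ]
    by_cases h : a < n - k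
    · rw [dif_pos h, if_pos (by omega)]; simp [phi]
    · rw [dif_neg h, if_neg (by omega), map_zero]

lemma qZ_big (n k a : ℕ) (h : n - k < a) : qZ n k (a : ℤ) = 0 := by
  cases a with
  | zero => omega
  | succ a => rw [qZ_succ, dif_neg (by omega)]

lemma pZ_big (n k a : ℕ) (h : k < a) : pZ n k (a : ℤ) = 0 := by
  cases a with
  | zero => omega
  | succ a => rw [pZ_succ, dif_neg (by omega)]

lemma phi_Rm (n k m : ℕ) (hm : 1 ≤ m) : phi n k (Rm n k m) ∈ Jid k (n - k) := by
  obtain ⟨m, rfl⟩ : ∃ m', m = m' + 1 := ⟨m - 1, by omega⟩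
  rw [Rm, map_sum, ← sub_zero (Finset.sum _ _), ← pp_hh k m, ← Finset.sum_sub_distrib]
  refine Ideal.sum_mem _ fun x _ => ?_
  rw [map_mul, phi_pZ, phi_qZ]
  split_ifs with h
  · simp
  · rw [mul_zero, zero_sub]
    exact Submodule.neg_mem _ (Ideal.mul_mem_left _ _ (hh_mem _ _ _ (by omega)))

lemma phi_mem (n k : ℕ) (x : PR n k) (hx : x ∈ Igr n k) : phi n k x ∈ Jid k (n - k) := by
  have : Igr n k ≤ (Jid k (n - k)).comap (phi n k) := by
    rw [Igr, Ideal.span_le]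
    rintro _ ⟨m, hm, rfl⟩
    have hm := Finset.mem_Icc.mp (Finset.mem_coe.mp hm)
    exact phi_Rm n k m hm.1
  exact this hx

lemma Rm_mem (n k m : ℕ) (hk : k ≤ n) (hm : 1 ≤ m) : Rm n k m ∈ Igr n k := by
  by_cases h : m ≤ n
  · exact Ideal.subset_span ⟨m, by simp [hm, h], rfl⟩
  · have : Rm n k m = 0 := by
      refine Finset.sum_eq_zero fun x hx => ?_
      have hx : x.1 + x.2 = m := by simpa using hx
      by_cases h1 : k < x.1
      · rw [pZ_big n k _ h1, zero_mul]
      · rw [qZ_big n k _ (by omega), mul_zero]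
    rw [this]; exact Ideal.zero_mem _

/-- the class of `p_a` in `A`. -/
noncomputable def pA (n k a : ℕ) : PR n k ⧸ Igr n k := Ideal.Quotient.mk _ (pZ n k (a : ℤ))
/-- the class of `q_a` in `A`. -/
noncomputable def qA (n k a : ℕ) : PR n k ⧸ Igr n k := Ideal.Quotient.mk _ (qZ n k (a : ℤ))
/-- the class of `h_a` in `A`. -/
noncomputable def hA (n k a : ℕ) : PR n k ⧸ Igr n k := Ideal.Quotient.mk _ (iot n k (hh k a))

lemma pq_sum (n k m : ℕ) (hk : k ≤ n) :
    ∑ x ∈ antidiagonal m, pA n k x.1 * qA n k x.2 = if m = 0 then 1 else 0 := by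
  split_ifs with h
  · subst h; simp [pA, qA, pZ, qZ]
  · have := Ideal.Quotient.eq_zero_iff_mem.mpr (Rm_mem n k m hk (by omega))
    rw [Rm, map_sum] at this
    simpa [pA, qA] using this

lemma ph_sum (n k m : ℕ) :
    ∑ x ∈ antidiagonal m, pA n k x.1 * hA n k x.2 = if m = 0 then 1 else 0 := by
  have h : ∑ x ∈ antidiagonal m, pA n k x.1 * hA n k x.2 =
      Ideal.Quotient.mk (Igr n k) (iot n k (∑ x ∈ antidiagonal m, pp k x.1 * hh k x.2)) := by
    simp only [map_sum, map_mul, iot_pp, pA, hA]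
  rw [h]
  cases m with
  | zero => simp [pp_zero, hh_zero]
  | succ m => rw [pp_hh]; simp

lemma hA_eq (n k a : ℕ) (hk : k ≤ n) : hA n k a = qA n k a := by
  have h1 : PowerSeries.mk (pA n k) * PowerSeries.mk (qA n k) = 1 := by
    ext m : 1
    simpa [PowerSeries.coeff_mul, PowerSeries.coeff_one] using pq_sum n k m hk
  have h2 : PowerSeries.mk (pA n k) * PowerSeries.mk (hA n k) = 1 := by
    ext m : 1
    simpa [PowerSeries.coeff_mul, PowerSeries.coeff_one] using ph_sum n k m
  have h3 : PowerSeries.mk (hA n k) = PowerSeries.mk (qA n k) := by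
    calc _ = (PowerSeries.mk (pA n k) * PowerSeries.mk (qA n k)) * PowerSeries.mk (hA n k) := by
          rw [h1, one_mul]
      _ = (PowerSeries.mk (pA n k) * PowerSeries.mk (hA n k)) * PowerSeries.mk (qA n k) := by ring
      _ = _ := by rw [h2, one_mul]
  simpa using congrArg (PowerSeries.coeff a) h3

lemma iot_mem (n k : ℕ) (hk : k ≤ n) (x : MvPolynomial (Fin k) ℂ) (hx : x ∈ Jid k (n - k)) :
    iot n k x ∈ Igr n k := by
  have : Jid k (n - k) ≤ (Igr n k).comap (iot n k) := by
    rw [Jid, Ideal.span_le]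
    rintro _ ⟨m, hm, rfl⟩
    have hm : n - k < m := hm
    have h := hA_eq n k m hk
    rw [qA, qZ_big n k m hm, map_zero] at h
    have h2 : iot n k (hh k m) ∈ Igr n k := Ideal.Quotient.eq_zero_iff_mem.mp h
    exact h2
  exact this hx

lemma mk_iot_phi (n k : ℕ) (hk : k ≤ n) (x : PR n k) :
    Ideal.Quotient.mk (Igr n k) (iot n k (phi n k x)) = Ideal.Quotient.mk (Igr n k) x := by
  have : ((Ideal.Quotient.mkₐ ℂ (Igr n k)).comp (iot n k)).comp (phi n k) =
      Ideal.Quotient.mkₐ ℂ (Igr n k) := by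
    apply MvPolynomial.algHom_ext
    rintro (j | l)
    · simp [phi, iot]
    · have h := hA_eq n k (l + 1) hk
      rw [hA, qA, qZ_succ, dif_pos l.2] at h
      simpa [phi] using h
  exact congrArg (fun f => f x) this

lemma pA_one_nilp (n k : ℕ) (hk : k ≤ n) : IsNilpotent (pA n k 1) := by
  classical
  let F : Polynomial (PR n k ⧸ Igr n k) :=
    ∑ i ∈ Finset.range (k + 1), Polynomial.monomial i (pA n k i)
  let G : Polynomial (PR n k ⧸ Igr n k) :=
    ∑ i ∈ Finset.range (n - k + 1), Polynomial.monomial i (qA n k i)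
  have hF : ∀ i, F.coeff i = pA n k i := by
    intro i
    simp only [F, Polynomial.finsetSum_coeff, Polynomial.coeff_monomial, Finset.sum_ite_eq',
      Finset.mem_range]
    split_ifs with h
    · rfl
    · rw [pA, pZ_big n k i (by omega), map_zero]
  have hG : ∀ i, G.coeff i = qA n k i := by
    intro i
    simp only [G, Polynomial.finsetSum_coeff, Polynomial.coeff_monomial, Finset.sum_ite_eq',
      Finset.mem_range]
    split_ifs with h
    · rfl
    · rw [qA, qZ_big n k i (by omega), map_zero]
  have hFG : F * G = 1 := by
    ext m
    rw [Polynomial.coeff_mul, Polynomial.coeff_one]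
    simp only [hF, hG]
    rw [pq_sum n k m hk]
  have hu : IsUnit F := IsUnit.of_mul_eq_one _ hFG
  have := (Polynomial.isUnit_iff_coeff_isUnit_isNilpotent.mp hu).2 1 one_ne_zero
  rwa [hF] at this

/-- integer weights on `P`. -/
def wP (n k : ℕ) : Fin k ⊕ Fin (n - k) → ℤ := fun i => (wt n k i : ℤ)

lemma weight_wP (n k : ℕ) (s : Fin k ⊕ Fin (n - k) →₀ ℕ) :
    Finsupp.weight (wP n k) s = ((Finsupp.weight (wt n k) s : ℕ) : ℤ) := by
  simp [Finsupp.weight_apply, Finsupp.sum, wP]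

lemma wP_iff (n k d : ℕ) (x : PR n k) :
    IsWeightedHomogeneous (wP n k) x (d : ℤ) ↔ IsWeightedHomogeneous (wt n k) x d := by
  constructor
  · intro h s hs
    have := h hs
    rw [weight_wP] at this
    exact_mod_cast this
  · intro h s hs
    rw [weight_wP, h hs]

lemma wP_neg (n k : ℕ) (d : ℤ) (hd : d < 0) (x : PR n k)
    (h : IsWeightedHomogeneous (wP n k) x d) : x = 0 := by
  refine h.eq_zero_of_no_monomials fun s => ?_
  rw [weight_wP]
  omega

lemma phi_hom (n k : ℕ) (d : ℤ) (x : PR n k) (h : IsWeightedHomogeneous (wP n k) x d) :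
    IsWeightedHomogeneous (wS k) (phi n k x) d := by
  refine whom_algHom _ _ (phi n k) ?_ d x h
  rintro (j | l)
  · simpa [phi, wP, wt, wS] using isWeightedHomogeneous_X ℂ (wS k) j
  · simpa [phi, wP, wt] using hh_hom k (l + 1)

lemma iot_hom (n k : ℕ) (d : ℤ) (x : MvPolynomial (Fin k) ℂ)
    (h : IsWeightedHomogeneous (wS k) x d) :
    IsWeightedHomogeneous (wP n k) (iot n k x) d := by
  refine whom_algHom _ _ (iot n k) ?_ d x h
  intro j
  simpa [iot, wP, wt, wS] using isWeightedHomogeneous_X ℂ (wP n k) (Sum.inl j)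

/-- The lowering operator on `P`. -/
noncomputable def FP (n k : ℕ) : PR n k →ₗ[ℂ] PR n k :=
  (iot n k).toLinearMap ∘ₗ Dop k (n - k) ∘ₗ (phi n k).toLinearMap

lemma FP_apply (n k : ℕ) (x : PR n k) : FP n k x = iot n k (Dop k (n - k) (phi n k x)) := rfl

lemma FP_mem (n k : ℕ) (hk : k ≤ n) (x : PR n k) (hx : x ∈ Igr n k) : FP n k x ∈ Igr n k :=
  iot_mem n k hk _ (Dop_mem _ _ _ (phi_mem n k x hx))

/-- graded pieces indexed by integers. -/
noncomputable def VZ (n k : ℕ) (d : ℤ) : Submodule ℂ (PR n k ⧸ Igr n k) :=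
  Submodule.map (Ideal.Quotient.mkₐ ℂ (Igr n k)).toLinearMap
    (MvPolynomial.weightedHomogeneousSubmodule ℂ (wP n k) d)

lemma VZ_mem (n k : ℕ) (d : ℤ) (y : PR n k ⧸ Igr n k) : y ∈ VZ n k d ↔
    ∃ x, IsWeightedHomogeneous (wP n k) x d ∧ Ideal.Quotient.mk (Igr n k) x = y := by
  rfl

lemma VZ_nat (n k d : ℕ) : VZ n k (d : ℤ) = Agr n k d := by
  rw [VZ, Agr]
  congr 1
  ext x
  exact wP_iff n k d x

lemma exists_FA (n k : ℕ) (hk : k ≤ n) : ∃ f : Module.End ℂ (PR n k ⧸ Igr n k),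
    ∀ x, f (Ideal.Quotient.mk (Igr n k) x) = Ideal.Quotient.mk (Igr n k) (FP n k x) := by
  refine ⟨Submodule.mapQ ((Igr n k).restrictScalars ℂ) ((Igr n k).restrictScalars ℂ) (FP n k)
    (fun x hx => FP_mem n k hk x hx), fun x => rfl⟩

lemma slData (n k : ℕ) (hk : k ≤ n) (f : Module.End ℂ (PR n k ⧸ Igr n k))
    (hf : ∀ x, f (Ideal.Quotient.mk (Igr n k) x) = Ideal.Quotient.mk (Igr n k) (FP n k x)) :
    SlData (LinearMap.mulLeft ℂ (pA n k 1)) f (VZ n k) ((k * (n - k) : ℕ) : ℤ) where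
  he := by
    intro d y hy
    obtain ⟨x, hx, rfl⟩ := (VZ_mem n k d y).mp hy
    refine (VZ_mem _ _ _ _).mpr ⟨pZ n k ((1 : ℕ) : ℤ) * x, ?_, ?_⟩
    · rw [← iot_pp, add_comm]
      exact (iot_hom n k _ _ (pp_hom k 1)).mul hx
    · simp [pA]
  hf := by
    intro d y hy
    obtain ⟨x, hx, rfl⟩ := (VZ_mem n k d y).mp hy
    rw [hf]
    exact (VZ_mem _ _ _ _).mpr ⟨_, iot_hom n k _ _ (Dop_hom _ _ _ _ (phi_hom n k d x hx)), rfl⟩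
  hc := by
    intro d y hy
    obtain ⟨x, hx, rfl⟩ := (VZ_mem n k d y).mp hy
    have h1 := Dop_comm k (n - k) d _ (phi_hom n k d x hx)
    have h2 := congrArg (fun z => Ideal.Quotient.mk (Igr n k) (iot n k z)) h1
    simp only [map_add, map_mul, map_smul, iot_pp] at h2
    have h3 : ∀ (c : ℂ) (z : PR n k), Ideal.Quotient.mk (Igr n k) (c • z) =
      c • Ideal.Quotient.mk (Igr n k) z := fun c z => rfl
    rw [h3, mk_iot_phi n k hk] at h2
    rw [LinearMap.mulLeft_apply, LinearMap.mulLeft_apply, hf, pA, ← map_mul (Ideal.Quotient.mk _)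
      (pZ n k ((1 : ℕ) : ℤ)) x, hf, FP_apply, FP_apply, map_mul, phi_pZ, h2]
    push_cast
    module
  hneg := by
    intro d hd y hy
    obtain ⟨x, hx, rfl⟩ := (VZ_mem n k d y).mp hy
    rw [wP_neg n k d hd x hx, map_zero]

end Transport

/-- Hard Lefschetz for the cohomology of the complex Grassmannian: for `0 ≤ 2j ≤ k(n-k)`,
multiplication by the class of `p_1^{k(n-k)-2j}` maps `A_j ≅ H^{2j}` bijectively onto
`A_{k(n-k)-j} ≅ H^{2(k(n-k)-j)}`: it is surjective onto `A_{k(n-k)-j}` and injective on `A_j`,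
hence a `ℂ`-linear isomorphism `A_j ≃ A_{k(n-k)-j}`. -/
theorem hard_lefschetz_grassmannian (n k : ℕ) (hk1 : 1 ≤ k) (hk2 : k ≤ n - 1)
    (j : ℕ) (hj : 2 * j ≤ k * (n - k)) :
    (Submodule.map
        (LinearMap.mulLeft ℂ (Ideal.Quotient.mk (Igr n k) (pZ n k 1 ^ (k * (n - k) - 2 * j))))
        (Agr n k j)
      = Agr n k (k * (n - k) - j))
    ∧ ∀ x ∈ Agr n k j,
        Ideal.Quotient.mk (Igr n k) (pZ n k 1 ^ (k * (n - k) - 2 * j)) * x = 0 → x = 0 := by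
  have hk : k ≤ n := by omega
  obtain ⟨f, hf⟩ := exists_FA n k hk
  have S := slData n k hk f hf
  obtain ⟨M, hM⟩ := pA_one_nilp n k hk
  have hMe : (LinearMap.mulLeft ℂ (pA n k 1)) ^ M = 0 := by
    rw [LinearMap.pow_mulLeft, hM]; simp
  have hpow : LinearMap.mulLeft ℂ
      (Ideal.Quotient.mk (Igr n k) (pZ n k 1 ^ (k * (n - k) - 2 * j))) =
      (LinearMap.mulLeft ℂ (pA n k 1)) ^ (k * (n - k) - 2 * j) := by
    rw [LinearMap.pow_mulLeft, map_pow]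
    rfl
  have hN : ((k * (n - k) : ℕ) : ℤ) = 2 * (j : ℤ) + ((k * (n - k) - 2 * j : ℕ) : ℤ) := by omega
  have hidx : ((k * (n - k) - j : ℕ) : ℤ) = (j : ℤ) + ((k * (n - k) - 2 * j : ℕ) : ℤ) := by omega
  refine ⟨?_, ?_⟩
  · rw [hpow, ← VZ_nat, ← VZ_nat, hidx]
    apply le_antisymm
    · rintro _ ⟨x, hx, rfl⟩
      exact S.e_pow _ _ x hx
    · intro y hy
      obtain ⟨x, hx, hxy⟩ := S.surj M hMe j _ hN y hy
      exact ⟨x, hx, hxy⟩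
  · intro x hx h
    rw [← VZ_nat] at hx
    refine S.inj j _ hN x hx ?_
    rw [← hpow]
    exact h
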